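/- Let c ∈ [nπ/2, (n+1)π/2), let D ⊂ ℝⁿ be a bounded domain and I ⊂ ℝ an open interval. If h ∈ F_{c−π/2}(D) is continuous on D, then the function w(t, x) := h(x), constant in t, belongs to ℱ_c(I × D). -/

import Mathlib

open Real Filter Matrix

noncomputable section

/-- The Hessian matrix of a function `v : ℝ^m → ℝ` at `x`. -/
def hessianMatrix {m : ℕ} (v : (Fin m → ℝ) → ℝ) (x : Fin m → ℝ) :
    Matrix (Fin m) (Fin m) ℝ :=
  Matrix.of fun i j => iteratedFDeriv ℝ 2 v x ![Pi.single i 1, Pi.single j 1]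

/-- The lifted Lagrangian angle θ̃(A) = ∑ arctan λ_j(A) of a real symmetric matrix. -/
def liftedAngle {m : ℕ} (A : Matrix (Fin m) (Fin m) ℝ) : ℝ :=
  if h : A.IsHermitian then ∑ j, Real.arctan (h.eigenvalues j) else 0

/-- The Harvey–Lawson branches `F_c` of the special Lagrangian subequation. -/
def Fc (m : ℕ) (c : ℝ) : Set (Matrix (Fin m) (Fin m) ℝ) :=
  {A | A.IsSymm ∧ c ≤ liftedAngle A}

/-- `I_n = diag(0,1,…,1)` as a complex `(n+1)×(n+1)` matrix. -/
def Inmat (n : ℕ) : Matrix (Fin (n+1)) (Fin (n+1)) ℂ :=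
  Matrix.diagonal fun i => if i = 0 then 0 else 1

/-- The complex matrix `I_n + i A`. -/
def cmat {n : ℕ} (A : Matrix (Fin (n+1)) (Fin (n+1)) ℝ) :
    Matrix (Fin (n+1)) (Fin (n+1)) ℂ :=
  Inmat n + Complex.I • A.map (fun a => (a : ℂ))

open Classical in
/-- The lifted space-time Lagrangian angle Θ̃, summing `Complex.arg` (with values in
`(-π, π]`) over the roots (with multiplicity) of the characteristic polynomial of
`I_n + i A`, shifted by `π/2` over the singular set `S = {det (I_n + iA) = 0}` where only
the nonzero roots are counted. -/
def spaceTimeAngle {n : ℕ} (A : Matrix (Fin (n+1)) (Fin (n+1)) ℝ) : ℝ :=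
  if (cmat A).det = 0 then
    π / 2 + ((((cmat A).charpoly.roots).filter (fun z => z ≠ 0)).map Complex.arg).sum
  else (((cmat A).charpoly.roots).map Complex.arg).sum

/-- The degenerate special Lagrangian subequation `ℱ_c ⊂ Sym(ℝ^{n+1})`. -/
def calF (n : ℕ) (c : ℝ) : Set (Matrix (Fin (n+1)) (Fin (n+1)) ℝ) :=
  {A | A.IsSymm ∧ c ≤ spaceTimeAngle A}

/-- Interior of a set of symmetric matrices, relative to the symmetric matrices. -/
def symInterior {m : ℕ} (F : Set (Matrix (Fin m) (Fin m) ℝ)) :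
    Set (Matrix (Fin m) (Fin m) ℝ) :=
  {A | A.IsSymm ∧ ∀ᶠ B in nhds A, B.IsSymm → B ∈ F}

/-- The dual subequation `F̃ = (−Int F)ᶜ` (within the symmetric matrices). -/
def dualSub {m : ℕ} (F : Set (Matrix (Fin m) (Fin m) ℝ)) :
    Set (Matrix (Fin m) (Fin m) ℝ) :=
  {A | A.IsSymm ∧ -A ∉ symInterior F}

/-- An `EReal`-valued (i.e. `[−∞,∞)`-valued) function is subaffine on `U` if, for every
affine function `a` and compact `K ⊆ U`, `u ≤ a` on `∂K` implies `u ≤ a` on `K`. -/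
def IsSubaffine {m : ℕ} (U : Set (Fin m → ℝ)) (u : (Fin m → ℝ) → EReal) : Prop :=
  ∀ (a : (Fin m → ℝ) →ᵃ[ℝ] ℝ) (K : Set (Fin m → ℝ)), IsCompact K → K ⊆ U →
    (∀ x ∈ frontier K, u x ≤ (a x : EReal)) → ∀ x ∈ K, u x ≤ (a x : EReal)

/-- `u` is of type `F` on `U` (i.e. `u ∈ F(U)`): `u` is `[−∞,∞)`-valued, upper
semicontinuous on `U`, and `u + v` is subaffine on `U` for every `C²` function `v`
whose Hessian lies in the dual subequation `F̃` at every point of `U`. -/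
def IsTypeF {m : ℕ} (F : Set (Matrix (Fin m) (Fin m) ℝ)) (U : Set (Fin m → ℝ))
    (u : (Fin m → ℝ) → EReal) : Prop :=
  (∀ x ∈ U, u x ≠ ⊤) ∧ UpperSemicontinuousOn u U ∧
    ∀ v : (Fin m → ℝ) → ℝ, ContDiffOn ℝ 2 v U →
      (∀ x ∈ U, hessianMatrix v x ∈ dualSub F) →
      IsSubaffine U (fun x => u x + ((v x : ℝ) : EReal))

/-- The lower-right `n×n` block `A⁺` of an `(n+1)×(n+1)` matrix. -/
def Aplus {n : ℕ} (A : Matrix (Fin (n+1)) (Fin (n+1)) ℝ) : Matrix (Fin n) (Fin n) ℝ :=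
  Matrix.of fun i j => A i.succ j.succ

end

/-!
A function has type `F` exactly when the second-order part of every quadratic polynomial touching it
strictly from above lies in `F`. If such a polynomial, with second-order part `A`, touches a
function `h` constant in `t`, then `A₀₀ > 0`. A shear `(t, x) ↦ (t + ℓ · x, x)` leaves `h` unchanged
and preserves `det (I_n + iA)`. It therefore also preserves the lifted angle, because the sum of the
logarithms of the eigenvalues is a logarithm of the determinant that varies continuously with `A`.
For the `ℓ` that clears the mixed entries of `A`, the angle splits into `π/2` and the angle of the
Schur complement of `A₀₀`, which is the second-order part of a polynomial touching `h` on `ℝⁿ`.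
-/

open scoped Topology

section Taylor

variable {E G : Type*} [NormedAddCommGroup E] [NormedSpace ℝ E] [NormedAddCommGroup G]
  [NormedSpace ℝ G]

lemma isLittleO_taylor_two {v : E → G} {x : E} (hv : ContDiffAt ℝ 2 v x) :
    (fun z => v (x + z) - v x - fderiv ℝ v x z - (1 / 2 : ℝ) • fderiv ℝ (fderiv ℝ v) x z z)
      =o[𝓝 0] fun z => ‖z‖ ^ 2 := by
  set B := fderiv ℝ (fderiv ℝ v) x
  have B_symm : ∀ y z, B y z = B z y := hv.isSymmSndFDerivAt (by simp)
  have diff_near : ∀ᶠ y in 𝓝 x, DifferentiableAt ℝ v y :=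
    (hv.eventually (by simp)).mono fun y hy => hy.differentiableAt two_ne_zero
  obtain ⟨ρ, hρ, hball⟩ := Metric.eventually_nhds_iff.1 diff_near
  have zero_mem : (0 : E) ∈ Metric.ball 0 ρ := Metric.mem_ball_self hρ
  have deriv_remainder : ∀ z ∈ Metric.ball (0 : E) ρ, HasFDerivWithinAt
      (fun z => v (x + z) - v x - fderiv ℝ v x z - (1 / 2 : ℝ) • B z z)
      (fderiv ℝ v (x + z) - fderiv ℝ v x - B z) (Metric.ball 0 ρ) z := by
    intro z hz
    have deriv_v : HasFDerivAt (fun z => v (x + z)) (fderiv ℝ v (x + z)) z :=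
      (hasFDerivAt_comp_add_left x).2 (hball (by simpa using hz)).hasFDerivAt
    have deriv_B := B.hasFDerivAt.clm_apply (hasFDerivAt_id z)
    refine ((((deriv_v.sub_const (v x)).sub (fderiv ℝ v x).hasFDerivAt).sub
      (deriv_B.const_smul (1 / 2 : ℝ))).congr_fderiv ?_).hasFDerivWithinAt
    ext w
    simp only [_root_.sub_apply, _root_.add_apply, _root_.smul_apply, smul_add,
      ContinuousLinearMap.comp_id, id_eq, ContinuousLinearMap.flip_apply, B_symm w z]
    module
  have fderiv_expansion : (fun z => fderiv ℝ v (x + z) - fderiv ℝ v x - B z)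
      =o[𝓝[Metric.ball 0 ρ] 0] fun z => ‖z - 0‖ ^ 1 := by
    rw [Metric.isOpen_ball.nhdsWithin_eq zero_mem]
    have fderiv_differentiable : DifferentiableAt ℝ (fderiv ℝ v) x :=
      (hv.fderiv_right (m := 1) (by norm_num)).differentiableAt one_ne_zero
    simpa using (hasFDerivAt_iff_isLittleO_nhds_zero.1
      fderiv_differentiable.hasFDerivAt).norm_right
  rw [← Metric.isOpen_ball.nhdsWithin_eq zero_mem]
  simpa using (convex_ball 0 ρ).isLittleO_pow_succ zero_mem deriv_remainder fderiv_expansion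

end Taylor

section QuadraticForm

variable {ι : Type*} [Fintype ι]

lemma abs_dotProduct_mulVec_le (A : Matrix ι ι ℝ) (z : ι → ℝ) :
    |z ⬝ᵥ A *ᵥ z| ≤ (∑ i, ∑ j, |A i j|) * ‖z‖ ^ 2 := by
  simp only [dotProduct, mulVec, Finset.mul_sum, Finset.sum_mul]
  refine (Finset.abs_sum_le_sum_abs _ _).trans (Finset.sum_le_sum fun i _ =>
    (Finset.abs_sum_le_sum_abs _ _).trans (Finset.sum_le_sum fun j _ => ?_))
  have hi : |z i| ≤ ‖z‖ := norm_le_pi_norm z i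
  have hj : |z j| ≤ ‖z‖ := norm_le_pi_norm z j
  calc |z i * (A i j * z j)| = |A i j| * (|z i| * |z j|) := by rw [abs_mul, abs_mul]; ring
    _ ≤ |A i j| * (‖z‖ * ‖z‖) := by gcongr
    _ = |A i j| * ‖z‖ ^ 2 := by rw [sq]

lemma sq_norm_le_dotProduct_self (z : ι → ℝ) : ‖z‖ ^ 2 ≤ z ⬝ᵥ z := by
  have dot_nonneg : 0 ≤ z ⬝ᵥ z := Finset.sum_nonneg fun j _ => mul_self_nonneg (z j)
  have coord_le (i : ι) : ‖z i‖ ≤ √(z ⬝ᵥ z) := abs_le_sqrt <| by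
    rw [sq]
    exact Finset.single_le_sum (f := fun j => z j * z j) (fun j _ => mul_self_nonneg (z j))
      (Finset.mem_univ i)
  exact (le_sqrt (norm_nonneg z) dot_nonneg).1 <|
    (pi_norm_le_iff_of_nonneg (sqrt_nonneg _)).2 coord_le

end QuadraticForm

section Jets

variable {m : ℕ}

lemma dotProduct_hessianMatrix_mulVec (v : (Fin m → ℝ) → ℝ) (x z : Fin m → ℝ) :
    z ⬝ᵥ hessianMatrix v x *ᵥ z = fderiv ℝ (fderiv ℝ v) x z z := by
  set b := (fderiv ℝ (fderiv ℝ v) x).toLinearMap₁₂ with hb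
  have hessian_eq : hessianMatrix v x = LinearMap.toMatrix₂' ℝ b := by
    ext i j
    simp [hessianMatrix, iteratedFDeriv_two_apply, hb, LinearMap.toMatrix₂'_apply]
  rw [hessian_eq, ← Matrix.toLinearMap₂'_apply', Matrix.toLinearMap₂'_toMatrix']
  rfl

lemma hessianMatrix_quadratic {H : Matrix (Fin m) (Fin m) ℝ} (hH : H.IsSymm) (x : Fin m → ℝ) :
    hessianMatrix (fun y => 1 / 2 * (y ⬝ᵥ H *ᵥ y)) x = H := by
  set B : (Fin m → ℝ) →L[ℝ] (Fin m → ℝ) →L[ℝ] ℝ :=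
    LinearMap.toContinuousBilinearMap (Matrix.toLinearMap₂' ℝ H)
  have B_apply (y z : Fin m → ℝ) : B y z = y ⬝ᵥ H *ᵥ z := Matrix.toLinearMap₂'_apply' H y z
  have B_symm (y z : Fin m → ℝ) : B y z = B z y := by
    rw [B_apply, B_apply, dotProduct_mulVec, ← mulVec_transpose, hH, dotProduct_comm]
  have first_deriv : fderiv ℝ (fun y => 1 / 2 * (y ⬝ᵥ H *ᵥ y)) = B := by
    ext1 y
    simp only [← B_apply]
    refine HasFDerivAt.fderiv (((B.hasFDerivAt.clm_apply (hasFDerivAt_id y)).const_mul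
      (1 / 2)).congr_fderiv ?_)
    ext w
    simp only [_root_.add_apply, _root_.smul_apply, smul_eq_mul,
      ContinuousLinearMap.comp_id, id_eq, ContinuousLinearMap.flip_apply, B_symm w y]
    ring
  ext i j
  rw [hessianMatrix, of_apply, iteratedFDeriv_two_apply, first_deriv, B.fderiv]
  simp [B_apply]

/-- `IsStrictUpperJet u x H`: near `x`, the function `u` lies below a quadratic polynomial with
second-order part `H`, with equality at `x` and a gap of at least `ε ‖z‖²` at `x + z`. These are the
strict upper contact jets of viscosity theory, with the gradient forgotten. -/
def IsStrictUpperJet (u : (Fin m → ℝ) → EReal) (x : Fin m → ℝ)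
    (H : Matrix (Fin m) (Fin m) ℝ) : Prop :=
  ∃ (r : ℝ) (ℓ : (Fin m → ℝ) →ₗ[ℝ] ℝ), ∃ ε > 0, u x = r ∧
    ∀ᶠ z in 𝓝 0, u (x + z) ≤ ((r + ℓ z + 1 / 2 * (z ⬝ᵥ H *ᵥ z) - ε * ‖z‖ ^ 2 : ℝ) : EReal)

namespace IsStrictUpperJet

variable {u : (Fin m → ℝ) → EReal} {x : Fin m → ℝ} {H : Matrix (Fin m) (Fin m) ℝ}

lemma add_contDiffAt (hu : IsStrictUpperJet u x H) {v : (Fin m → ℝ) → ℝ}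
    (hv : ContDiffAt ℝ 2 v x) :
    IsStrictUpperJet (fun y => u y + v y) x (H + hessianMatrix v x) := by
  obtain ⟨r, ℓ, ε, hε, hux, hu⟩ := hu
  refine ⟨r + v x, ℓ + (fderiv ℝ v x).toLinearMap, ε / 2, by positivity, by simp [hux], ?_⟩
  filter_upwards [hu, (isLittleO_taylor_two hv).bound (half_pos hε)] with z hu_le taylor
  rw [norm_pow, norm_norm, smul_eq_mul, ← dotProduct_hessianMatrix_mulVec] at taylor
  refine (add_le_add hu_le le_rfl).trans ?_
  rw [← EReal.coe_add, EReal.coe_le_coe_iff, add_mulVec, dotProduct_add]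
  simp only [LinearMap.add_apply, ContinuousLinearMap.coe_coe]
  linarith [(abs_le.1 taylor).2]

lemma eventually_nhds (hu : IsStrictUpperJet u x H) :
    ∀ᶠ B in 𝓝 H, IsStrictUpperJet u x B := by
  obtain ⟨r, ℓ, ε, hε, hux, hu⟩ := hu
  have small : ∀ᶠ B in 𝓝 H, ∑ i, ∑ j, |(H - B) i j| < ε := by
    have : Continuous fun B : Matrix (Fin m) (Fin m) ℝ => ∑ i, ∑ j, |(H - B) i j| := by fun_prop
    exact this.continuousAt.eventually_lt_const (by simpa using hε)
  filter_upwards [small] with B hB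
  refine ⟨r, ℓ, ε / 2, by positivity, hux, hu.mono fun z hz => hz.trans ?_⟩
  have quadratic_gap : z ⬝ᵥ H *ᵥ z - z ⬝ᵥ B *ᵥ z ≤ ε * ‖z‖ ^ 2 := by
    rw [← dotProduct_sub, ← sub_mulVec]
    exact (le_abs_self _).trans ((abs_dotProduct_mulVec_le _ z).trans (by gcongr))
  exact EReal.coe_le_coe_iff.2 (by linarith)

lemma mem_symInterior {F : Set (Matrix (Fin m) (Fin m) ℝ)}
    (hF : ∀ B, B.IsSymm → IsStrictUpperJet u x B → B ∈ F) (hu : IsStrictUpperJet u x H)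
    (hH : H.IsSymm) : H ∈ symInterior F :=
  ⟨hH, hu.eventually_nhds.mono fun B hB hBsymm => hF B hBsymm hB⟩

lemma restrict (hu : IsStrictUpperJet u x H) {k : ℕ} {T : Matrix (Fin m) (Fin k) ℝ}
    (hT : Function.Injective T.mulVec) {w : (Fin k → ℝ) → EReal} {y : Fin k → ℝ}
    (hw : ∀ z, w (y + z) = u (x + T *ᵥ z)) : IsStrictUpperJet w y (Tᵀ * H * T) := by
  obtain ⟨r, ℓ, ε, hε, hux, hu⟩ := hu
  obtain ⟨K, hK, antilipschitz⟩ := T.mulVecLin.exists_antilipschitzWith (LinearMap.ker_eq_bot.2 hT)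
  have norm_le (z : Fin k → ℝ) : ‖z‖ ≤ K * ‖T *ᵥ z‖ := by simpa using antilipschitz.le_mul_dist z 0
  have tendsto_zero : Tendsto (fun z => T *ᵥ z) (𝓝 0) (𝓝 0) := by
    have : Continuous fun z => T *ᵥ z := by fun_prop
    simpa using this.tendsto 0
  refine ⟨r, ℓ ∘ₗ T.mulVecLin, ε / K ^ 2, by positivity, by simpa [hux] using hw 0, ?_⟩
  filter_upwards [tendsto_zero.eventually hu] with z hz
  rw [hw]
  refine hz.trans (EReal.coe_le_coe_iff.2 ?_)
  have quadratic_eq : z ⬝ᵥ (Tᵀ * H * T) *ᵥ z = T *ᵥ z ⬝ᵥ H *ᵥ T *ᵥ z := by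
    rw [← mulVec_mulVec, ← mulVec_mulVec, dotProduct_mulVec, vecMul_transpose]
  have gap_le : ε / K ^ 2 * ‖z‖ ^ 2 ≤ ε * ‖T *ᵥ z‖ ^ 2 :=
    calc ε / K ^ 2 * ‖z‖ ^ 2 ≤ ε / K ^ 2 * (K * ‖T *ᵥ z‖) ^ 2 := by gcongr; exact norm_le z
      _ = ε * ‖T *ᵥ z‖ ^ 2 := by
        have : (K : ℝ) ≠ 0 := by positivity
        field_simp
  rw [quadratic_eq, LinearMap.comp_apply, mulVecLin_apply]
  linarith

lemma dotProduct_mulVec_pos_of_const (hu : IsStrictUpperJet u x H) {e : Fin m → ℝ} (he : e ≠ 0)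
    (hconst : ∀ t : ℝ, u (x + t • e) = u x) : 0 < e ⬝ᵥ H *ᵥ e := by
  obtain ⟨r, ℓ, ε, hε, hux, hu⟩ := hu
  have along_line : ∀ᶠ t in 𝓝 (0 : ℝ),
      0 ≤ t * ℓ e + 1 / 2 * (t ^ 2 * (e ⬝ᵥ H *ᵥ e)) - ε * (t ^ 2 * ‖e‖ ^ 2) := by
    have tendsto_zero : Tendsto (fun t : ℝ => t • e) (𝓝 0) (𝓝 0) := by
      have : Continuous fun t : ℝ => t • e := by fun_prop
      simpa using this.tendsto 0
    filter_upwards [tendsto_zero.eventually hu] with t ht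
    rw [hconst, hux, EReal.coe_le_coe_iff, map_smul, mulVec_smul, smul_dotProduct, dotProduct_smul,
      norm_smul, mul_pow, norm_eq_abs, sq_abs] at ht
    simp only [smul_eq_mul] at ht
    linarith
  have along_opposite := (continuous_neg.tendsto' (0 : ℝ) 0 neg_zero).eventually along_line
  obtain ⟨t, ⟨ht, ht'⟩, ht0 : t ≠ 0⟩ := (((along_line.and along_opposite).filter_mono
    (nhdsWithin_le_nhds (s := {0}ᶜ))).and self_mem_nhdsWithin).exists
  have ht_sq : 0 < t ^ 2 := by positivity
  have : 0 < t ^ 2 * (e ⬝ᵥ H *ᵥ e) := by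
    have : 0 < ε * (t ^ 2 * ‖e‖ ^ 2) := by positivity
    linarith
  exact pos_of_mul_pos_right this ht_sq.le

end IsStrictUpperJet

end Jets

section Subaffine

variable {m : ℕ} {U : Set (Fin m → ℝ)} {u : (Fin m → ℝ) → EReal} {x : Fin m → ℝ}
  {F : Set (Matrix (Fin m) (Fin m) ℝ)}

lemma upperSemicontinuousOn_add_coe (hu : UpperSemicontinuousOn u U) {v : (Fin m → ℝ) → ℝ}
    (hv : ContinuousOn v U) : UpperSemicontinuousOn (fun y => u y + v y) U :=
  hu.add' (continuous_coe_real_ereal.comp_continuousOn hv).upperSemicontinuousOn fun _ _ =>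
    EReal.continuousAt_add (.inr (EReal.coe_ne_bot _)) (.inr (EReal.coe_ne_top _))

lemma not_isSubaffine_of_isStrictUpperJet_zero (hU : IsOpen U) (hx : x ∈ U)
    (hu : IsStrictUpperJet u x 0) : ¬ IsSubaffine U u := by
  obtain ⟨r, ℓ, ε, hε, hux, hu⟩ := hu
  have x_add_mem : ∀ᶠ z in 𝓝 (0 : Fin m → ℝ), x + z ∈ U :=
    (continuous_const_add x).tendsto' 0 x (add_zero x) |>.eventually (hU.mem_nhds hx)
  obtain ⟨ρ, hρ, hball⟩ := Metric.nhds_basis_closedBall.eventually_iff.1 (hu.and x_add_mem)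
  replace hball (y) (hy : y ∈ Metric.closedBall x ρ) :=
    @hball (y - x) (by simpa [dist_eq_norm] using hy)
  simp only [add_sub_cancel, zero_mulVec, dotProduct_zero, mul_zero, add_zero] at hball
  let a : (Fin m → ℝ) →ᵃ[ℝ] ℝ :=
    ℓ.toAffineMap + AffineMap.const ℝ (Fin m → ℝ) (r - ℓ x - ε * ρ ^ 2)
  have a_apply (y) : a y = r + ℓ (y - x) - ε * ρ ^ 2 := by
    change ℓ y + (r - ℓ x - ε * ρ ^ 2) = _
    rw [map_sub]
    ring
  intro hsub
  have le_on_frontier : ∀ y ∈ frontier (Metric.closedBall x ρ), u y ≤ a y := by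
    intro y hy
    have hy_norm : ‖y - x‖ = ρ := by
      simpa [dist_eq_norm] using Metric.frontier_closedBall_subset_sphere hy
    have hy_mem := Metric.isClosed_closedBall.frontier_subset hy
    simpa only [a_apply, hy_norm] using (hball y hy_mem).1
  have le_centre := hsub a _ (isCompact_closedBall x ρ) (fun y hy => (hball y hy).2) le_on_frontier
    x (Metric.mem_closedBall_self hρ.le)
  rw [hux, a_apply, EReal.coe_le_coe_iff, sub_self, map_zero] at le_centre
  have : 0 < ε * ρ ^ 2 := by positivity
  linarith

lemma isStrictUpperJet_zero_of_isLocalMax {r : ℝ} (hux : u x = r) (a : (Fin m → ℝ) →ᵃ[ℝ] ℝ)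
    {ε : ℝ} (hε : 0 < ε)
    (hmax : IsLocalMax (fun y => u y + ((ε * (y ⬝ᵥ y) - a y : ℝ) : EReal)) x) :
    IsStrictUpperJet u x 0 := by
  refine ⟨r, a.linear - (2 * ε) • dotProductBilin ℝ ℝ x, ε, hε, hux, ?_⟩
  filter_upwards [((continuous_const_add x).tendsto' 0 x (add_zero x)).eventually hmax] with z hz
  have a_expand : a (x + z) = a.linear z + a x := by simpa [add_comm] using a.map_vadd x z
  rw [hux, ← EReal.coe_add, ← EReal.le_sub_iff_add_le (.inl (EReal.coe_ne_bot _))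
    (.inl (EReal.coe_ne_top _)), ← EReal.coe_sub, a_expand] at hz
  refine hz.trans (EReal.coe_le_coe_iff.2 ?_)
  have norm_le : ε * ‖z‖ ^ 2 ≤ ε * (z ⬝ᵥ z) := by gcongr; exact sq_norm_le_dotProduct_self z
  simp only [LinearMap.sub_apply, LinearMap.smul_apply, dotProductBilin_apply_apply, smul_eq_mul,
    zero_mulVec, dotProduct_zero, add_dotProduct, dotProduct_add, dotProduct_comm z x]
  linarith

lemma exists_isStrictUpperJet_zero_of_not_isSubaffine (hu_top : ∀ y ∈ U, u y ≠ ⊤)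
    (hu : UpperSemicontinuousOn u U) (hsub : ¬ IsSubaffine U u) :
    ∃ x ∈ U, IsStrictUpperJet u x 0 := by
  simp only [IsSubaffine, not_forall, not_le] at hsub
  obtain ⟨a, K, hK, hKU, le_on_frontier, x₀, hx₀, lt_at_x₀⟩ := hsub
  have real_of_lt {y} (hy : y ∈ K) (hlt : ⊥ < u y) : ∃ r : ℝ, u y = r :=
    ⟨_, (EReal.coe_toReal (hu_top y (hKU hy)) hlt.ne').symm⟩
  obtain ⟨r₀, hr₀⟩ := real_of_lt hx₀ (bot_le.trans_lt lt_at_x₀)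
  rw [hr₀, EReal.coe_lt_coe_iff] at lt_at_x₀
  obtain ⟨M, hM⟩ : ∃ M, ∀ y ∈ K, y ⬝ᵥ y ≤ M :=
    let ⟨M, hM⟩ := hK.bddAbove_image (f := fun y => y ⬝ᵥ y) (by fun_prop)
    ⟨M, fun y hy => hM (Set.mem_image_of_mem _ hy)⟩
  obtain ⟨ε, hε, hεM⟩ := exists_pos_mul_lt (sub_pos.2 lt_at_x₀) (M - x₀ ⬝ᵥ x₀)
  set q : (Fin m → ℝ) → ℝ := fun y => ε * (y ⬝ᵥ y) - a y
  have q_continuous : Continuous q := by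
    have := a.continuous_of_finiteDimensional
    fun_prop
  -- By the choice of `ε`, adding `q` makes the maximum strict without moving it to the frontier.
  obtain ⟨x, hx, hmax⟩ := (upperSemicontinuousOn_add_coe (hu.mono hKU)
    q_continuous.continuousOn).exists_isMaxOn ⟨x₀, hx₀⟩ hK
  have gt_at_max : ((ε * M : ℝ) : EReal) < u x + q x :=
    calc ((ε * M : ℝ) : EReal) < ((r₀ + q x₀ : ℝ) : EReal) :=
          EReal.coe_lt_coe_iff.2 (by dsimp only [q]; linarith)
      _ ≤ u x + q x := by simpa [hr₀] using hmax hx₀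
  have hx_interior : x ∈ interior K := by
    by_contra hx_frontier
    have := le_on_frontier x ⟨subset_closure hx, hx_frontier⟩
    refine gt_at_max.not_ge ((add_le_add this le_rfl).trans ?_)
    rw [← EReal.coe_add, EReal.coe_le_coe_iff]
    have : ε * (x ⬝ᵥ x) ≤ ε * M := by gcongr; exact hM x hx
    dsimp only [q]
    linarith
  obtain ⟨r, hr⟩ := real_of_lt hx (bot_lt_iff_ne_bot.2 fun hbot => by simp [hbot] at gt_at_max)
  exact ⟨x, hKU hx, isStrictUpperJet_zero_of_isLocalMax hr a hε
    (hmax.isLocalMax (mem_interior_iff_mem_nhds.1 hx_interior))⟩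

theorem isTypeF_iff (hU : IsOpen U) : IsTypeF F U u ↔ (∀ x ∈ U, u x ≠ ⊤) ∧
    UpperSemicontinuousOn u U ∧
    ∀ x ∈ U, ∀ H : Matrix (Fin m) (Fin m) ℝ, H.IsSymm → IsStrictUpperJet u x H → H ∈ F := by
  refine and_congr_right fun hu_top => and_congr_right fun hu_usc => ⟨?_, ?_⟩
  · intro hu x hx H hH hjet
    by_contra hHF
    let v : (Fin m → ℝ) → ℝ := fun y => 1 / 2 * (y ⬝ᵥ (-H) *ᵥ y)
    have v_contDiff : ContDiff ℝ 2 v := by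
      simp only [v, dotProduct, mulVec]
      fun_prop
    have hessian_v (y) : hessianMatrix v y = -H := hessianMatrix_quadratic hH.neg y
    have neg_mem_dual : -H ∈ dualSub F :=
      ⟨hH.neg, fun hmem => hHF (by simpa using hmem.2.self_of_nhds (by simpa using hH))⟩
    refine not_isSubaffine_of_isStrictUpperJet_zero hU hx ?_
      (hu v v_contDiff.contDiffOn fun y _ => (hessian_v y).symm ▸ neg_mem_dual)
    simpa [hessian_v] using hjet.add_contDiffAt v_contDiff.contDiffAt
  · intro hu v hv hess_v
    by_contra hsub
    obtain ⟨x, hx, hjet⟩ := exists_isStrictUpperJet_zero_of_not_isSubaffine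
      (fun y hy => EReal.add_ne_top (hu_top y hy) (EReal.coe_ne_top _))
      (upperSemicontinuousOn_add_coe hu_usc hv.continuousOn) hsub
    have hvx : ContDiffAt ℝ 2 v x := hv.contDiffAt (hU.mem_nhds hx)
    have jet_u : IsStrictUpperJet u x (-hessianMatrix v x) := by
      have hessian_neg : hessianMatrix (fun y => -v y) x = -hessianMatrix v x := by
        ext i j
        exact congrArg (· ![Pi.single i 1, Pi.single j 1])
          (iteratedFDeriv_neg_apply (𝕜 := ℝ) (i := 2) (f := v) (x := x))
      simpa [hessian_neg, ← sub_eq_add_neg, EReal.add_sub_cancel_right] using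
        hjet.add_contDiffAt hvx.neg
    exact (hess_v x hx).2 (jet_u.mem_symInterior (hu x hx) (hess_v x hx).1.neg)

end Subaffine

section AffineImage

variable {ι K : Type*} [Fintype ι] [DecidableEq ι] [Field K] [IsAlgClosed K]

lemma det_smul_one_add_smul (M : Matrix ι ι K) (a b : K) :
    (a • (1 : Matrix ι ι K) + b • M).det = (M.charpoly.roots.map (a + b * ·)).prod := by
  have splits := IsAlgClosed.splits M.charpoly
  have card_roots : M.charpoly.roots.card = Fintype.card ι := by
    rw [← splits.natDegree_eq_card_roots, M.charpoly_natDegree_eq_dim]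
  rcases eq_or_ne b 0 with rfl | hb
  · simp [card_roots]
  have as_char_matrix : a • (1 : Matrix ι ι K) + b • M = (-b) • (scalar ι (-(a / b)) - M) := by
    rw [scalar_apply, ← smul_one_eq_diagonal, smul_sub, smul_smul, neg_mul_neg,
      mul_div_cancel₀ a hb, neg_smul, sub_neg_eq_add]
  rw [as_char_matrix, det_smul, ← eval_charpoly,
    splits.eval_eq_prod_roots_of_monic M.charpoly_monic, ← card_roots,
    ← Multiset.prod_replicate, ← Multiset.map_const', ← Multiset.prod_map_mul]
  congr 1
  refine Multiset.map_congr rfl fun z _ => ?_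
  field_simp
  ring

lemma roots_charpoly_smul_one_add_smul (M : Matrix ι ι K) (a b : K) :
    (a • (1 : Matrix ι ι K) + b • M).charpoly.roots = M.charpoly.roots.map (a + b * ·) := by
  suffices charpoly_eq : (a • (1 : Matrix ι ι K) + b • M).charpoly =
      ((M.charpoly.roots.map (a + b * ·)).map fun z => Polynomial.X - Polynomial.C z).prod by
    rw [charpoly_eq, Polynomial.roots_multiset_prod_X_sub_C]
  refine Polynomial.funext fun t => ?_
  have as_affine : scalar ι t - (a • (1 : Matrix ι ι K) + b • M) =
      (t - a) • (1 : Matrix ι ι K) + (-b) • M := by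
    rw [scalar_apply, ← smul_one_eq_diagonal]
    module
  rw [eval_charpoly, as_affine, det_smul_one_add_smul, Polynomial.eval_multiset_prod]
  simp only [Multiset.map_map]
  congr 1
  refine Multiset.map_congr rfl fun z _ => ?_
  simp only [Function.comp_apply, Polynomial.eval_sub, Polynomial.eval_X, Polynomial.eval_C]
  ring

end AffineImage

section LogDet

variable {ι X : Type*} [Fintype ι] [DecidableEq ι] [TopologicalSpace X]

lemma continuous_sum_log_roots_charpoly {M : X → Matrix ι ι ℂ} (hM : Continuous M)
    (hslit : ∀ x, ∀ z ∈ (M x).charpoly.roots, z ∈ Complex.slitPlane) :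
    Continuous fun x => ((M x).charpoly.roots.map Complex.log).sum := by
  -- `Φ (·, x)` lifts `s ↦ det ((1 - s) + s M)` through `exp` from `Φ (0, x) = 0`, so the unique
  -- lifting property gives joint continuity without following individual eigenvalues.
  let Φ : unitInterval × X → ℂ := fun p =>
    ((M p.2).charpoly.roots.map fun z => Complex.log (1 - p.1 + p.1 * z)).sum
  have segment_mem {x z} (hz : z ∈ (M x).charpoly.roots) (s : unitInterval) :
      (1 - s + s * z : ℂ) ∈ Complex.slitPlane := by
    have := Complex.starConvex_one_slitPlane.add_smul_mem (y := z - 1)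
      (by simpa using hslit x z hz) s.2.1 s.2.2
    convert this using 1
    rw [Complex.real_smul]
    ring
  have exp_Φ (p) : Complex.exp (Φ p) =
      ((1 - p.1 : ℂ) • (1 : Matrix ι ι ℂ) + (p.1 : ℂ) • M p.2).det := by
    rw [det_smul_one_add_smul, Complex.exp_multiset_sum, Multiset.map_map]
    congr 1
    exact Multiset.map_congr rfl fun z hz =>
      Complex.exp_log (Complex.slitPlane_ne_zero (segment_mem hz p.1))
  let f : C(unitInterval × X, {z : ℂ // z ≠ 0}) :=
    ⟨fun p => ⟨Complex.exp (Φ p), Complex.exp_ne_zero _⟩, by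
      simp only [exp_Φ]
      fun_prop⟩
  have Φ_continuous : Continuous Φ :=
    Complex.isCoveringMap_exp.isLocalHomeomorph.continuous_lift
      Complex.isCoveringMap_exp.isSeparatedMap f rfl (by simp [Φ, continuous_const]) fun x => by
        refine continuous_multiset_sum _ fun z hz => Continuous.clog ?_ fun s => segment_mem hz s
        fun_prop
  have at_one : Continuous fun x => Φ (1, x) := by fun_prop
  simpa [Φ] using at_one

lemma sum_arg_roots_charpoly_eq [PreconnectedSpace X] {M : X → Matrix ι ι ℂ} (hM : Continuous M)
    (hslit : ∀ x, ∀ z ∈ (M x).charpoly.roots, z ∈ Complex.slitPlane)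
    (hdet : ∀ x y, (M x).det = (M y).det) (x y : X) :
    ((M x).charpoly.roots.map Complex.arg).sum = ((M y).charpoly.roots.map Complex.arg).sum := by
  have exp_sum_log (x) : Complex.exp ((M x).charpoly.roots.map Complex.log).sum = (M x).det := by
    rw [Complex.exp_multiset_sum, Multiset.map_map, det_eq_prod_roots_charpoly]
    congr 1
    exact (Multiset.map_congr rfl fun z hz =>
      Complex.exp_log (Complex.slitPlane_ne_zero (hslit x z hz))).trans (Multiset.map_id' _)
  have log_sum_eq := Complex.isCoveringMap_exp.isSeparatedMap.const_of_comp
    Complex.isCoveringMap_exp.isLocalHomeomorph.isLocallyInjective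
    (continuous_sum_log_roots_charpoly hM hslit)
    (fun x y => Subtype.ext (by simpa only [exp_sum_log] using hdet x y)) x y
  have im_sum_log (x) : ((M x).charpoly.roots.map Complex.log).sum.im =
      ((M x).charpoly.roots.map Complex.arg).sum := by
    simpa [Function.comp_def, Complex.log_im] using
      map_multiset_sum Complex.imAddGroupHom ((M x).charpoly.roots.map Complex.log)
  rw [← im_sum_log, ← im_sum_log, log_sum_eq]

end LogDet

open ComplexOrder in
lemma re_nonneg_of_mem_roots_charpoly {ι : Type*} [Fintype ι] [DecidableEq ι] {M : Matrix ι ι ℂ}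
    (hM : (M + Mᴴ).PosSemidef) {z : ℂ} (hz : z ∈ M.charpoly.roots) : 0 ≤ z.re := by
  have det_eq_zero : (scalar ι z - M).det = 0 := by
    rw [← eval_charpoly]
    exact (Polynomial.mem_roots'.1 hz).2
  obtain ⟨v, hv, hv_ker⟩ := exists_mulVec_eq_zero_iff.2 det_eq_zero
  have eigen : M *ᵥ v = z • v := by
    rw [sub_mulVec, sub_eq_zero, scalar_apply, ← smul_one_eq_diagonal, smul_mulVec, one_mulVec]
      at hv_ker
    exact hv_ker.symm
  have form_eq : star v ⬝ᵥ (M + Mᴴ) *ᵥ v = ((2 * z.re : ℝ) : ℂ) * (star v ⬝ᵥ v) := by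
    rw [add_mulVec, dotProduct_add, dotProduct_mulVec _ Mᴴ, ← star_mulVec, eigen, star_smul,
      smul_dotProduct, dotProduct_smul, smul_eq_mul, smul_eq_mul, ← add_mul]
    congr 1
    exact Complex.add_conj z
  have norm_sq_pos : 0 < (star v ⬝ᵥ v).re :=
    (Complex.pos_iff.1 (dotProduct_star_self_pos_iff.2 hv)).1
  have form_nonneg : 0 ≤ 2 * z.re * (star v ⬝ᵥ v).re := by
    rw [← Complex.re_ofReal_mul, ← form_eq]
    exact (Complex.nonneg_iff.1 (hM.dotProduct_mulVec_nonneg v)).1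
  linarith [nonneg_of_mul_nonneg_left form_nonneg norm_sq_pos]

lemma arg_one_add_I_mul (t : ℝ) : Complex.arg (1 + Complex.I * t) = arctan t := by
  have re_pos : 0 < (1 + Complex.I * t).re := by simp
  obtain ⟨h₁, h₂⟩ := abs_lt.1 (Complex.abs_arg_lt_pi_div_two_iff.2 (.inl re_pos))
  rw [← arctan_tan h₁ h₂, Complex.tan_arg]
  simp

lemma roots_charpoly_one_add_I_smul {ι : Type*} [Fintype ι] [DecidableEq ι] {C : Matrix ι ι ℝ}
    (hC : C.IsHermitian) :
    (1 + Complex.I • C.map (fun a => (a : ℂ))).charpoly.roots =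
      Finset.univ.val.map fun j => 1 + Complex.I * (hC.eigenvalues j : ℂ) := by
  have roots_map : (C.map Complex.ofRealHom).charpoly.roots =
      Finset.univ.val.map fun j => (hC.eigenvalues j : ℂ) := by
    rw [charpoly_map, hC.splits_charpoly.roots_map, hC.roots_charpoly_eq_eigenvalues,
      Multiset.map_map]
    rfl
  have := roots_charpoly_smul_one_add_smul (C.map Complex.ofRealHom) 1 Complex.I
  rw [one_smul, roots_map, Multiset.map_map] at this
  exact this

lemma sum_arg_roots_charpoly_one_add_I_smul {m : ℕ} {C : Matrix (Fin m) (Fin m) ℝ}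
    (hC : C.IsHermitian) :
    ((1 + Complex.I • C.map (fun a => (a : ℂ))).charpoly.roots.map Complex.arg).sum =
      liftedAngle C := by
  rw [roots_charpoly_one_add_I_smul hC, Multiset.map_map, liftedAngle, dif_pos hC]
  exact Finset.sum_congr rfl fun j _ => arg_one_add_I_mul _

lemma det_one_add_I_smul_ne_zero {ι : Type*} [Fintype ι] [DecidableEq ι] {C : Matrix ι ι ℝ}
    (hC : C.IsHermitian) : (1 + Complex.I • C.map (fun a => (a : ℂ))).det ≠ 0 := by
  rw [det_eq_prod_roots_charpoly, roots_charpoly_one_add_I_smul hC]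
  refine Finset.prod_ne_zero_iff.2 fun j _ h => ?_
  simpa using congrArg Complex.re h

lemma charpoly_eq_X_sub_C_mul_of_col_zero {R : Type*} [CommRing R] {n : ℕ}
    {M : Matrix (Fin (n + 1)) (Fin (n + 1)) R} (hM : ∀ i : Fin n, M i.succ 0 = 0) : M.charpoly =
    (Polynomial.X - Polynomial.C (M 0 0)) * (M.submatrix Fin.succ Fin.succ).charpoly := by
  have minor_eq : M.charmatrix.submatrix Fin.succ Fin.succ =
      (M.submatrix Fin.succ Fin.succ).charmatrix := by
    ext1 i j
    simp [charmatrix_apply, diagonal_apply]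
  rw [charpoly, det_succ_column_zero, Fin.sum_univ_succ, Fin.succAbove_zero, minor_eq]
  simp [charpoly, hM]

section TimeShear

variable {n : ℕ} {A B : Matrix (Fin (n + 1)) (Fin (n + 1)) ℝ}

lemma roots_charpoly_cmat_of_col_zero (hB : ∀ i : Fin n, B i.succ 0 = 0) :
    (cmat B).charpoly.roots =
      Complex.I * B 0 0 ::ₘ (1 + Complex.I • (Aplus B).map (fun a => (a : ℂ))).charpoly.roots := by
  have block_eq : (cmat B).submatrix Fin.succ Fin.succ =
      1 + Complex.I • (Aplus B).map (fun a => (a : ℂ)) := by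
    ext i j
    simp [cmat, Inmat, Aplus, diagonal_apply, one_apply]
  have corner_eq : cmat B 0 0 = Complex.I * B 0 0 := by simp [cmat, Inmat]
  rw [charpoly_eq_X_sub_C_mul_of_col_zero fun i => by simp [cmat, Inmat, hB i], block_eq, corner_eq,
    Polynomial.roots_mul (mul_ne_zero (Polynomial.X_sub_C_ne_zero _) (charpoly_monic _).ne_zero),
    Polynomial.roots_X_sub_C, Multiset.singleton_add]

lemma aplus_isSymm (hA : A.IsSymm) : (Aplus A).IsSymm :=
  hA.submatrix Fin.succ

lemma det_cmat_ne_zero_of_col_zero (hB : B.IsSymm) (hcol : ∀ i : Fin n, B i.succ 0 = 0)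
    (hpos : 0 < B 0 0) : (cmat B).det ≠ 0 := by
  rw [det_eq_prod_roots_charpoly, roots_charpoly_cmat_of_col_zero hcol, Multiset.prod_cons,
    ← det_eq_prod_roots_charpoly]
  exact mul_ne_zero (mul_ne_zero Complex.I_ne_zero (Complex.ofReal_ne_zero.2 hpos.ne'))
    (det_one_add_I_smul_ne_zero (isHermitian_iff_isSymm.2 (aplus_isSymm hB)))

lemma spaceTimeAngle_of_col_zero (hB : B.IsSymm) (hcol : ∀ i : Fin n, B i.succ 0 = 0)
    (hpos : 0 < B 0 0) : spaceTimeAngle B = π / 2 + liftedAngle (Aplus B) := by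
  rw [spaceTimeAngle, if_neg (det_cmat_ne_zero_of_col_zero hB hcol hpos),
    roots_charpoly_cmat_of_col_zero hcol, Multiset.map_cons, Multiset.sum_cons,
    sum_arg_roots_charpoly_one_add_I_smul (isHermitian_iff_isSymm.2 (aplus_isSymm hB)), mul_comm,
    Complex.arg_real_mul _ hpos, Complex.arg_I]

/-- The matrix of the shear `(t, x) ↦ (t + ℓ · x, x)` of space-time. -/
def timeShear (ℓ : Fin n → ℝ) : Matrix (Fin (n + 1)) (Fin (n + 1)) ℝ :=
  1 + vecMulVec (Pi.single 0 1) (Fin.cons 0 ℓ)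

lemma timeShear_mulVec (ℓ : Fin n → ℝ) (z : Fin (n + 1) → ℝ) :
    timeShear ℓ *ᵥ z = z + Pi.single 0 (ℓ ⬝ᵥ Fin.tail z) := by
  have dot_eq : (Fin.cons 0 ℓ : Fin (n + 1) → ℝ) ⬝ᵥ z = ℓ ⬝ᵥ Fin.tail z := by
    simp [dotProduct, Fin.sum_univ_succ, Fin.tail]
  rw [timeShear, add_mulVec, one_mulVec, vecMulVec_mulVec, dot_eq]
  congr 1
  ext i
  simp [Pi.single_apply]

lemma timeShear_zero : timeShear (0 : Fin n → ℝ) = 1 := by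
  have cons_zero : (Fin.cons 0 0 : Fin (n + 1) → ℝ) = 0 := Fin.cons_self_tail 0
  simp [timeShear, cons_zero]

lemma det_timeShear (ℓ : Fin n → ℝ) : (timeShear ℓ).det = 1 := by
  rw [timeShear, vecMulVec_eq Unit, det_one_add_replicateCol_mul_replicateRow]
  simp

lemma inmat_mul_timeShear (ℓ : Fin n → ℝ) :
    Inmat n * (timeShear ℓ).map (fun a => (a : ℂ)) = Inmat n := by
  ext i j
  rw [Inmat, diagonal_mul]
  rcases eq_or_ne i 0 with rfl | hi
  · simp [diagonal_apply]
  · simp [hi, timeShear, vecMulVec_apply, one_apply, diagonal_apply, apply_ite]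

lemma cmat_timeShear_conj (A : Matrix (Fin (n + 1)) (Fin (n + 1)) ℝ) (ℓ : Fin n → ℝ) :
    cmat ((timeShear ℓ)ᵀ * A * timeShear ℓ) =
      ((timeShear ℓ).map (fun a => (a : ℂ)))ᵀ * cmat A * (timeShear ℓ).map (fun a => (a : ℂ)) := by
  have shear_mul_Inmat : ((timeShear ℓ).map (fun a => (a : ℂ)))ᵀ * Inmat n = Inmat n := by
    simpa [Inmat] using congrArg transpose (inmat_mul_timeShear ℓ)
  have map_conj : ((timeShear ℓ)ᵀ * A * timeShear ℓ).map Complex.ofRealHom =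
      ((timeShear ℓ).map Complex.ofRealHom)ᵀ * A.map Complex.ofRealHom *
        (timeShear ℓ).map Complex.ofRealHom := by
    rw [Matrix.map_mul, Matrix.map_mul, transpose_map]
  rw [cmat, cmat, mul_add, add_mul, shear_mul_Inmat, inmat_mul_timeShear, Matrix.mul_smul,
    Matrix.smul_mul]
  exact congrArg (fun N => Inmat n + Complex.I • N) map_conj

lemma det_cmat_timeShear_conj (A : Matrix (Fin (n + 1)) (Fin (n + 1)) ℝ) (ℓ : Fin n → ℝ) :
    (cmat ((timeShear ℓ)ᵀ * A * timeShear ℓ)).det = (cmat A).det := by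
  have det_eq_one : ((timeShear ℓ).map (fun a => (a : ℂ))).det = 1 := by
    have := (Complex.ofRealHom.map_det (timeShear ℓ)).symm
    rwa [det_timeShear, map_one] at this
  rw [cmat_timeShear_conj, det_mul, det_mul, det_transpose, det_eq_one, one_mul, mul_one]

open ComplexOrder in
lemma cmat_add_conjTranspose_posSemidef (hA : A.IsSymm) : (cmat A + (cmat A)ᴴ).PosSemidef := by
  have skew_hermitian : (Complex.I • A.map (fun a => (a : ℂ)))ᴴ =
      -(Complex.I • A.map (fun a => (a : ℂ))) := by
    ext i j
    simp [hA.apply i j]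
  have Inmat_posSemidef : (Inmat n).PosSemidef := PosSemidef.diagonal fun i => by
    rcases eq_or_ne i 0 with rfl | hi
    · simp
    · simp [hi]
  rw [cmat, conjTranspose_add, skew_hermitian, Inmat_posSemidef.isHermitian.eq, add_add_add_comm,
    add_neg_cancel, add_zero]
  exact Inmat_posSemidef.add Inmat_posSemidef

lemma mem_slitPlane_of_mem_roots_charpoly_cmat (hA : A.IsSymm) (hdet : (cmat A).det ≠ 0) {z : ℂ}
    (hz : z ∈ (cmat A).charpoly.roots) : z ∈ Complex.slitPlane := by
  have re_nonneg : 0 ≤ z.re :=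
    re_nonneg_of_mem_roots_charpoly (cmat_add_conjTranspose_posSemidef hA) hz
  have z_ne_zero : z ≠ 0 := by
    rintro rfl
    exact hdet ((det_eq_prod_roots_charpoly _).trans (Multiset.prod_eq_zero hz))
  rcases re_nonneg.eq_or_lt with re_eq_zero | re_pos
  · exact .inr fun him => z_ne_zero (Complex.ext re_eq_zero.symm him)
  · exact .inl re_pos

lemma isSymm_transpose_mul_mul {R m k : Type*} [CommSemiring R] [Fintype m] {A : Matrix m m R}
    (hA : A.IsSymm) (T : Matrix m k R) : (Tᵀ * A * T).IsSymm := by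
  rw [IsSymm, transpose_mul, transpose_mul, transpose_transpose, hA, Matrix.mul_assoc]

lemma spaceTimeAngle_timeShear_conj (hA : A.IsSymm) (hdet : (cmat A).det ≠ 0) (ℓ : Fin n → ℝ) :
    spaceTimeAngle ((timeShear ℓ)ᵀ * A * timeShear ℓ) = spaceTimeAngle A := by
  let path : ℝ → Matrix (Fin (n + 1)) (Fin (n + 1)) ℝ := fun r =>
    (timeShear (r • ℓ))ᵀ * A * timeShear (r • ℓ)
  have path_det (r) : (cmat (path r)).det = (cmat A).det := det_cmat_timeShear_conj A _
  have path_continuous : Continuous fun r => cmat (path r) := by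
    have shear_continuous : Continuous fun r : ℝ => timeShear (r • ℓ) := by
      unfold timeShear
      fun_prop
    have conj_continuous : Continuous path := by fun_prop
    exact continuous_const.add
      ((conj_continuous.matrix_map Complex.continuous_ofReal).const_smul Complex.I)
  have := sum_arg_roots_charpoly_eq path_continuous
    (fun r z hz => mem_slitPlane_of_mem_roots_charpoly_cmat (isSymm_transpose_mul_mul hA _)
      (by rwa [path_det]) hz) (fun r s => by rw [path_det, path_det]) 1 0
  have path_zero : path 0 = A := by simp [path, timeShear_zero]
  have path_one : path 1 = (timeShear ℓ)ᵀ * A * timeShear ℓ := by simp [path]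
  rw [path_zero, path_one] at this
  rwa [spaceTimeAngle, spaceTimeAngle, if_neg hdet, if_neg (by rwa [det_cmat_timeShear_conj])]

/-- The slope `ℓ` for which conjugation of a symmetric `A` by `timeShear ℓ` clears the mixed entries
`A₀ⱼ`, `j ≠ 0`; meaningful only if `A₀₀ ≠ 0`. -/
noncomputable def clearingSlope (A : Matrix (Fin (n + 1)) (Fin (n + 1)) ℝ) : Fin n → ℝ :=
  fun j => -(A 0 j.succ / A 0 0)

/-- The Schur complement `A⁺ - a aᵀ / A₀₀` of the time entry of a symmetric matrix, where `a` is
the vector of its mixed entries: the space block left after shearing these away. -/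
noncomputable def schurComplement (A : Matrix (Fin (n + 1)) (Fin (n + 1)) ℝ) :
    Matrix (Fin n) (Fin n) ℝ :=
  Aplus ((timeShear (clearingSlope A))ᵀ * A * timeShear (clearingSlope A))

lemma clearingSlope_mul (hA : A 0 0 ≠ 0) (j : Fin n) :
    clearingSlope A j * A 0 0 = -A 0 j.succ := by
  rw [clearingSlope, neg_mul, div_mul_cancel₀ _ hA]

lemma timeShear_conj_succ_zero (A : Matrix (Fin (n + 1)) (Fin (n + 1)) ℝ) (ℓ : Fin n → ℝ)
    (i : Fin n) : ((timeShear ℓ)ᵀ * A * timeShear ℓ) i.succ 0 = A i.succ 0 + ℓ i * A 0 0 := by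
  simp [timeShear, mul_apply, vecMulVec_apply, one_apply, add_mul, Fin.sum_univ_succ]

lemma timeShear_conj_zero_zero (A : Matrix (Fin (n + 1)) (Fin (n + 1)) ℝ) (ℓ : Fin n → ℝ) :
    ((timeShear ℓ)ᵀ * A * timeShear ℓ) 0 0 = A 0 0 := by
  simp [timeShear, mul_apply, vecMulVec_apply, one_apply]

theorem spaceTimeAngle_eq_pi_div_two_add_liftedAngle (hA : A.IsSymm) (hpos : 0 < A 0 0) :
    spaceTimeAngle A = π / 2 + liftedAngle (schurComplement A) := by
  let ℓ := clearingSlope A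
  have col_zero (i : Fin n) : ((timeShear ℓ)ᵀ * A * timeShear ℓ) i.succ 0 = 0 := by
    rw [timeShear_conj_succ_zero, hA.apply 0 i.succ, clearingSlope_mul hpos.ne', add_neg_cancel]
  have corner_pos : 0 < ((timeShear ℓ)ᵀ * A * timeShear ℓ) 0 0 := by
    rwa [timeShear_conj_zero_zero]
  have sheared_symm := isSymm_transpose_mul_mul hA (timeShear ℓ)
  have det_ne_zero : (cmat A).det ≠ 0 := by
    rw [← det_cmat_timeShear_conj A ℓ]
    exact det_cmat_ne_zero_of_col_zero sheared_symm col_zero corner_pos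
  rw [← spaceTimeAngle_timeShear_conj hA det_ne_zero ℓ,
    spaceTimeAngle_of_col_zero sheared_symm col_zero corner_pos]
  rfl

lemma schurComplement_isSymm (hA : A.IsSymm) : (schurComplement A).IsSymm :=
  aplus_isSymm (isSymm_transpose_mul_mul hA _)

end TimeShear

lemma IsStrictUpperJet.aplus_timeShear_conj {n : ℕ} {h : (Fin n → ℝ) → EReal}
    {y : Fin (n + 1) → ℝ} {H : Matrix (Fin (n + 1)) (Fin (n + 1)) ℝ}
    (hjet : IsStrictUpperJet (fun z => h (Fin.tail z)) y H) (ℓ : Fin n → ℝ) :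
    IsStrictUpperJet h (Fin.tail y) (Aplus ((timeShear ℓ)ᵀ * H * timeShear ℓ)) := by
  let T : Matrix (Fin (n + 1)) (Fin n) ℝ := (timeShear ℓ).submatrix id Fin.succ
  have T_mulVec (ξ : Fin n → ℝ) : T *ᵥ ξ = Fin.cons (ℓ ⬝ᵥ ξ) ξ := by
    have : T *ᵥ ξ = timeShear ℓ *ᵥ Fin.cons 0 ξ := by
      ext i
      simp [T, mulVec, dotProduct, Fin.sum_univ_succ]
    rw [this, timeShear_mulVec]
    ext i
    cases i using Fin.cases <;> simp
  have T_injective : Function.Injective T.mulVec := fun ξ η hξη => by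
    simpa [T_mulVec] using congrArg Fin.tail hξη
  refine hjet.restrict T_injective fun ξ => congrArg h ?_
  rw [T_mulVec]
  rfl

theorem const_in_t_subsolution_general (n : ℕ) (c : ℝ) {U : Set (Fin (n + 1) → ℝ)} (hU : IsOpen U)
    {D : Set (Fin n → ℝ)} (hD : IsOpen D) (hUD : Set.MapsTo Fin.tail U D)
    {h : (Fin n → ℝ) → EReal} (hh : IsTypeF (Fc n (c - π / 2)) D h) :
    IsTypeF (calF n c) U (fun y => h (Fin.tail y)) := by
  obtain ⟨h_top, h_usc, h_jet⟩ := (isTypeF_iff hD).1 hh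
  refine (isTypeF_iff hU).2 ⟨fun y hy => h_top _ (hUD hy), ?_, fun y hy H hH hjet => ?_⟩
  · exact h_usc.comp continuous_id.finTail.continuousOn hUD
  · have H_pos : 0 < H 0 0 := by
      have const_in_t (t : ℝ) : Fin.tail (y + t • Pi.single 0 1) = Fin.tail y := by
        ext i
        simp [Fin.tail]
      simpa using hjet.dotProduct_mulVec_pos_of_const (e := Pi.single 0 1) (by simp)
        fun t => congrArg h (const_in_t t)
    have angle_ge := (h_jet _ (hUD hy) (schurComplement H) (schurComplement_isSymm hH)
      (hjet.aplus_timeShear_conj _)).2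
    refine ⟨hH, ?_⟩
    rw [spaceTimeAngle_eq_pi_div_two_add_liftedAngle hH H_pos]
    linarith

/-- Let `c ∈ [nπ/2, (n+1)π/2)`, `D ⊂ ℝⁿ` a bounded domain and `I ⊂ ℝ` an open interval.
If `h ∈ F_{c−π/2}(D)` is continuous on `D`, then `w(t,x) := h(x)`, constant in `t`,
belongs to `ℱ_c(I × D)`. -/
theorem const_in_t_subsolution (n : ℕ) (c : ℝ)
    (hc : (n : ℝ) * π / 2 ≤ c) (hc' : c < ((n : ℝ) + 1) * π / 2)
    (I : Set ℝ) (hIopen : IsOpen I) (hIconv : Convex ℝ I) (hIne : I.Nonempty)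
    (D : Set (Fin n → ℝ)) (hDopen : IsOpen D) (hDconn : IsConnected D)
    (hDbdd : Bornology.IsBounded D)
    (h : (Fin n → ℝ) → ℝ)
    (hhF : IsTypeF (Fc n (c - π / 2)) D (fun x => ((h x : ℝ) : EReal)))
    (hhcont : ContinuousOn h D) :
    IsTypeF (calF n c) {y | y 0 ∈ I ∧ Fin.tail y ∈ D}
      (fun y => ((h (Fin.tail y) : ℝ) : EReal)) := by
  have isOpen_prod : IsOpen {y : Fin (n + 1) → ℝ | y 0 ∈ I ∧ Fin.tail y ∈ D} :=
    (hIopen.preimage (continuous_apply 0)).inter (hDopen.preimage continuous_id.finTail)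
  exact const_in_t_subsolution_general n c isOpen_prod hDopen (fun _ hy => hy.2) hhF
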